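/- Let F : (0,∞) → ℝ be a function, let m and n be positive integers, and set d := min{m,n}. The following are equivalent: (1) F[A] is totally positive for every totally positive m × n matrix A; (2) F[A] is totally positive for every totally positive d × d matrix A; (3) if d = 1, F(x) > 0 for all x > 0; if d = 2, F(x) = c·x^α for some c > 0 and some α > 0; if d = 3, F(x) = c·x^α for some c > 0 and some α ≥ 1; if d ≥ 4, F(x) = c·x for some c > 0. -/

import Mathlib

/-- An `m × n` real matrix is totally positive if all of its minors are positive. -/
def IsTPMat {m n : ℕ} (A : Matrix (Fin m) (Fin n) ℝ) : Prop :=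
  ∀ (k : ℕ) (r : Fin k → Fin m) (c : Fin k → Fin n),
    StrictMono r → StrictMono c → 0 < (A.submatrix r c).det

/-!
Adding a row `1, ε, ε ^ 2, …` with small `ε > 0` on top of a totally positive matrix keeps it
totally positive, so a transform that works in size `m × n` works in all smaller sizes, while minors
only involve square blocks of size at most `min m n`.

For `2 × 2` matrices the condition says that `h s = log (F (exp s))` satisfies
`h a + h b < h c + h d` whenever `a + b < c + d`. This makes `h` affine, hence `F x = c * x ^ α`
with `α > 0`.

Rescaling rows and columns, and then subtracting the first row, turns a `3 × 3` determinant into a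
`2 × 2` determinant of `(entry) ^ α - 1`. For `1 ≤ α` such determinants stay positive because
`((1 + l * (t - 1)) ^ α - 1) / (t ^ α - 1)` is monotone in `t > 1` when `1 ≤ l`; for `α < 1` they
fail to be for `!![1 + s, 2; 2, 1 + 2 / s]` when `s > 0` is small.

For `4 × 4` matrices take the singular matrix `M = !![3, 5, 6; 7, 12, 15; 12, 21, 27]`. Writing
`(1 + x) ^ α - 1 = x * ψ x`, positivity for totally positive perturbations of the matrix with
entries `1 + t * M i j`, bordered by ones, forces the determinant of `M i j * ψ (t * M i j)` to be
nonnegative for `t > 0`. This determinant vanishes at `t = 0` and its derivative there is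
`-9 * α ^ 3 * (α - 1)`, so `α ≤ 1`.
-/

open Filter Set Topology

section Minors

variable {m n : ℕ}

lemma exists_strictMono_succ_comp_eq {k : ℕ} {r : Fin k → Fin (m + 1)} (hr : StrictMono r)
    (h0 : ∀ i, r i ≠ 0) : ∃ s : Fin k → Fin m, StrictMono s ∧ Fin.succ ∘ s = r :=
  ⟨fun i => (r i).pred (h0 i), fun _ _ hij => Fin.pred_lt_pred_iff.mpr (hr hij),
    funext fun i => Fin.succ_pred (r i) (h0 i)⟩

namespace IsTPMat

variable {A : Matrix (Fin m) (Fin n) ℝ}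

lemma transpose (hA : IsTPMat A) : IsTPMat A.transpose := fun k r c hr hc => by
  rw [← Matrix.transpose_submatrix, Matrix.det_transpose]
  exact hA k c r hc hr

lemma submatrix {p q : ℕ} (hA : IsTPMat A) {r : Fin p → Fin m} {c : Fin q → Fin n}
    (hr : StrictMono r) (hc : StrictMono c) : IsTPMat (A.submatrix r c) := fun k r' c' hr' hc' => by
  rw [Matrix.submatrix_submatrix]
  exact hA k _ _ (hr.comp hr') (hc.comp hc')

lemma det_pos {A : Matrix (Fin n) (Fin n) ℝ} (hA : IsTPMat A) : 0 < A.det :=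
  hA n id id strictMono_id strictMono_id

lemma apply_pos (hA : IsTPMat A) (i : Fin m) (j : Fin n) : 0 < A i j := by
  simpa using hA 1 (fun _ => i) (fun _ => j) (Subsingleton.strictMono _) (Subsingleton.strictMono _)

lemma mul_lt_mul (hA : IsTPMat A) {i i' : Fin m} {j j' : Fin n} (hi : i < i') (hj : j < j') :
    A i j' * A i' j < A i j * A i' j' := by
  have h := hA 2 ![i, i'] ![j, j'] (by simpa [Fin.strictMono_iff_lt_succ])
    (by simpa [Fin.strictMono_iff_lt_succ])
  rw [Matrix.det_fin_two] at h
  simpa using h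

lemma smul {c : ℝ} (hc : 0 < c) (hA : IsTPMat A) : IsTPMat (c • A) := fun k r s hr hs => by
  change 0 < (c • A.submatrix r s).det
  rw [Matrix.det_smul]
  exact mul_pos (by positivity) (hA k r s hr hs)

end IsTPMat

lemma isTPMat_of_det_pos {A : Matrix (Fin (n + 1)) (Fin (n + 1)) ℝ}
    (h : ∀ k ≤ n, ∀ r c : Fin k → Fin (n + 1), StrictMono r → StrictMono c →
      0 < (A.submatrix r c).det)
    (hdet : 0 < A.det) : IsTPMat A := fun k r c hr hc => by
  obtain hk | rfl := (Fin.le_of_injective r hr.injective).lt_or_eq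
  · exact h k (Nat.le_of_lt_succ hk) r c hr hc
  · rwa [hr.eq_id, hc.eq_id]

lemma isTPMat_fin_one {A : Matrix (Fin 1) (Fin 1) ℝ} (h : 0 < A 0 0) : IsTPMat A := by
  refine isTPMat_of_det_pos (fun k hk r c _ _ => ?_) (by rwa [Matrix.det_fin_one])
  interval_cases k
  simp

lemma isTPMat_fin_two {A : Matrix (Fin 2) (Fin 2) ℝ} (h1 : ∀ i j, 0 < A i j)
    (hdet : 0 < A.det) : IsTPMat A := by
  refine isTPMat_of_det_pos (fun k hk r c hr hc => ?_) hdet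
  interval_cases k
  · simp
  · simpa using h1 _ _

lemma isTPMat_fin_three {A : Matrix (Fin 3) (Fin 3) ℝ} (h1 : ∀ i j, 0 < A i j)
    (h2 : ∀ i, ∀ i' > i, ∀ j, ∀ j' > j, A i j' * A i' j < A i j * A i' j')
    (hdet : 0 < A.det) : IsTPMat A := by
  refine isTPMat_of_det_pos (fun k hk r c hr hc => ?_) hdet
  interval_cases k
  · simp
  · simpa using h1 _ _
  · rw [Matrix.det_fin_two, sub_pos]
    exact h2 _ _ (hr Fin.zero_lt_one) _ _ (hc Fin.zero_lt_one)

lemma isTPMat_fin_four {A : Matrix (Fin 4) (Fin 4) ℝ} (h1 : ∀ i j, 0 < A i j)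
    (h2 : ∀ i, ∀ i' > i, ∀ j, ∀ j' > j, A i j' * A i' j < A i j * A i' j')
    (h3 : ∀ i, ∀ i' > i, ∀ i'' > i', ∀ j, ∀ j' > j, ∀ j'' > j',
      0 < (A.submatrix ![i, i', i''] ![j, j', j'']).det)
    (hdet : 0 < A.det) : IsTPMat A := by
  refine isTPMat_of_det_pos (fun k hk r c hr hc => ?_) hdet
  interval_cases k
  · simp
  · simpa using h1 _ _
  · rw [Matrix.det_fin_two, sub_pos]
    exact h2 _ _ (hr Fin.zero_lt_one) _ _ (hc Fin.zero_lt_one)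
  · have h := h3 (r 0) (r 1) (hr (by decide)) (r 2) (hr (by decide))
      (c 0) (c 1) (hc (by decide)) (c 2) (hc (by decide))
    convert h using 3 <;> ext i <;> fin_cases i <;> rfl

end Minors

section Extension

variable {R : Type*} {m n : ℕ} {A : Matrix (Fin m) (Fin n) ℝ}

/-- The matrix obtained from `A` by adding the row `1, ε, ε ^ 2, …` on top of it,
which for small `ε > 0` extends a totally positive matrix to a larger one. -/
def consPowRow [Monoid R] (A : Matrix (Fin m) (Fin n) R) (ε : R) : Matrix (Fin (m + 1)) (Fin n) R :=
  Matrix.of (Matrix.vecCons (fun j => ε ^ (j : ℕ)) A)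

-- The lowest power of `ε` in the expansion along the new row comes from its first entry.
lemma det_submatrix_consPowRow [CommRing R] {k : ℕ} (A : Matrix (Fin m) (Fin n) R) (ε : R)
    {r : Fin (k + 1) → Fin (m + 1)} {c : Fin (k + 1) → Fin n} {s : Fin k → Fin m}
    (hr : r 0 = 0) (hs : Fin.succ ∘ s = r ∘ Fin.succ) (hc : StrictMono c) :
    ((consPowRow A ε).submatrix r c).det = ε ^ (c 0 : ℕ) * ∑ j : Fin (k + 1),
      (-1) ^ (j : ℕ) * ε ^ ((c j : ℕ) - c 0) * (A.submatrix s (c ∘ j.succAbove)).det := by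
  have hsub (j : Fin (k + 1)) : ((consPowRow A ε).submatrix r c).submatrix Fin.succ j.succAbove =
      A.submatrix s (c ∘ j.succAbove) := by
    rw [Matrix.submatrix_submatrix, ← hs]
    rfl
  rw [Matrix.det_succ_row_zero, Finset.mul_sum]
  refine Finset.sum_congr rfl fun j _ => ?_
  have hj : (c 0 : ℕ) ≤ c j := hc.monotone (Fin.zero_le j)
  have hentry : (consPowRow A ε).submatrix r c 0 j = ε ^ (c 0 : ℕ) * ε ^ ((c j : ℕ) - c 0) := by
    rw [← pow_add, Nat.add_sub_cancel' hj, Matrix.submatrix_apply, hr]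
    rfl
  rw [hsub, hentry]
  ring

lemma IsTPMat.eventually_det_submatrix_consPowRow_pos (hA : IsTPMat A) {k : ℕ}
    {r : Fin k → Fin (m + 1)} {c : Fin k → Fin n} (hr : StrictMono r) (hc : StrictMono c) :
    ∀ᶠ ε in 𝓝[>] 0, 0 < ((consPowRow A ε).submatrix r c).det := by
  by_cases h0 : ∀ i, r i ≠ 0
  · obtain ⟨s, hs, rfl⟩ := exists_strictMono_succ_comp_eq hr h0
    exact Eventually.of_forall fun _ => hA k s c hs hc
  obtain ⟨i, hi⟩ := not_forall_not.mp h0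
  obtain _ | k := k
  · exact i.elim0
  have hr0 : r 0 = 0 := Fin.le_zero_iff.mp (hi ▸ hr.monotone (Fin.zero_le i))
  obtain ⟨s, hs, hs_eq⟩ := exists_strictMono_succ_comp_eq (hr.comp Fin.strictMono_succ)
    fun i => (hr0 ▸ hr i.succ_pos).ne'
  let g (ε : ℝ) : ℝ := ∑ j : Fin (k + 1),
    (-1) ^ (j : ℕ) * ε ^ ((c j : ℕ) - c 0) * (A.submatrix s (c ∘ j.succAbove)).det
  have hg0 : g 0 = (A.submatrix s (c ∘ Fin.succ)).det := by
    have hlt (j : Fin k) : (c j.succ : ℕ) - c 0 ≠ 0 := (Nat.sub_pos_of_lt (hc j.succ_pos)).ne'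
    simp only [g, Fin.sum_univ_succ, zero_pow (hlt _), tsub_self, pow_zero, mul_one, mul_zero,
      zero_mul, Finset.sum_const_zero, add_zero, one_mul, Fin.val_zero, Fin.succAbove_zero]
  have hgcont : Continuous g := by fun_prop
  have hgpos : ∀ᶠ ε in 𝓝[>] 0, 0 < g ε := nhdsWithin_le_nhds <| hgcont.continuousAt.eventually
    (lt_mem_nhds (hg0 ▸ hA k s _ hs (hc.comp Fin.strictMono_succ)))
  filter_upwards [hgpos, self_mem_nhdsWithin] with ε hgε hε
  rw [det_submatrix_consPowRow A ε hr0 hs_eq hc]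
  exact mul_pos (pow_pos hε _) hgε

lemma IsTPMat.exists_consPowRow (hA : IsTPMat A) : ∃ ε, IsTPMat (consPowRow A ε) := by
  have hev : ∀ᶠ ε in 𝓝[>] (0 : ℝ), ∀ (k : Fin (n + 1)) (r : Fin k → Fin (m + 1))
      (c : Fin k → Fin n), StrictMono r → StrictMono c →
      0 < ((consPowRow A ε).submatrix r c).det := by
    simp only [eventually_all]
    exact fun k r c hr hc => hA.eventually_det_submatrix_consPowRow_pos hr hc
  obtain ⟨ε, hε⟩ := hev.exists
  exact ⟨ε, fun k r c hr hc =>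
    hε ⟨k, Nat.lt_succ_of_le (Fin.le_of_injective c hc.injective)⟩ r c hr hc⟩

end Extension

/-- Applying `F` entrywise maps totally positive `m × n` matrices to totally positive ones. -/
def PreservesTP (F : ℝ → ℝ) (m n : ℕ) : Prop :=
  ∀ A : Matrix (Fin m) (Fin n) ℝ, IsTPMat A → IsTPMat (A.map F)

section PreservesTP

variable {F G : ℝ → ℝ} {m n : ℕ}

lemma PreservesTP.swap (h : PreservesTP F m n) : PreservesTP F n m :=
  fun _ hA => (h _ hA.transpose).transpose

lemma PreservesTP.of_le_left {p : ℕ} (hp : p ≤ m) (h : PreservesTP F m n) :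
    PreservesTP F p n := by
  induction m, hp using Nat.le_induction with
  | base => exact h
  | succ m _ ih =>
    refine ih fun A hA => ?_
    obtain ⟨ε, hε⟩ := hA.exists_consPowRow
    exact (h _ hε).submatrix Fin.strictMono_succ strictMono_id

lemma PreservesTP.of_le {p q : ℕ} (hp : p ≤ m) (hq : q ≤ n) (h : PreservesTP F m n) :
    PreservesTP F p q :=
  ((h.of_le_left hp).swap.of_le_left hq).swap

lemma preservesTP_of_det_map_pos
    (h : ∀ k ≤ min m n, ∀ B : Matrix (Fin k) (Fin k) ℝ, IsTPMat B → 0 < (B.map F).det) :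
    PreservesTP F m n := fun _ hA k r c hr hc =>
  h k (le_min (Fin.le_of_injective r hr.injective) (Fin.le_of_injective c hc.injective)) _
    (hA.submatrix hr hc)

lemma preservesTP_const_mul_iff {c : ℝ} (hc : 0 < c) (hF : ∀ x, 0 < x → F x = c * G x) :
    PreservesTP F m n ↔ PreservesTP G m n := by
  have hmap {A : Matrix (Fin m) (Fin n) ℝ} (hA : IsTPMat A) : A.map F = c • A.map G :=
    Matrix.ext fun i j => hF _ (hA.apply_pos i j)
  refine ⟨fun h A hA => ?_, fun h A hA => hmap hA ▸ (h A hA).smul hc⟩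
  simpa [hmap hA, smul_smul, hc.ne'] using (h A hA).smul (inv_pos.mpr hc)

lemma PreservesTP.pos (h : PreservesTP F 1 1) {x : ℝ} (hx : 0 < x) : 0 < F x :=
  (h !![x] (isTPMat_fin_one hx)).apply_pos 0 0

lemma PreservesTP.mul_lt_mul (h : PreservesTP F 2 2) {a b c d : ℝ} (ha : 0 < a) (hb : 0 < b)
    (hc : 0 < c) (hd : 0 < d) (hlt : b * c < a * d) : F b * F c < F a * F d := by
  have hA : IsTPMat !![a, b; c, d] :=
    isTPMat_fin_two (by simp [Fin.forall_fin_two, *]) (by simpa [Matrix.det_fin_two])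
  simpa using (h _ hA).mul_lt_mul Fin.zero_lt_one Fin.zero_lt_one

end PreservesTP

section Power

lemma addMonoidHom_apply_eq_mul_of_monotone {f : ℝ →+ ℝ} (hf : Monotone f) (x : ℝ) :
    f x = x * f 1 := by
  simpa using map_real_smul f
    (MeasureTheory.Measure.AddMonoidHom.continuous_of_measurable f hf.measurable) x 1

-- Comparing `(x, y)` with `(z, x + y - z)` at a point `z` where the monotone function `h` is
-- continuous shows that `h x + h y` depends only on `x + y`.
lemma add_eq_add_zero_of_add_lt_add {h : ℝ → ℝ}
    (hh : ∀ a b c d, a + b < c + d → h a + h b < h c + h d) (x y : ℝ) :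
    h x + h y = h (x + y) + h 0 := by
  have hmono : Monotone h := fun a b hab => by
    obtain rfl | hlt := hab.eq_or_lt
    · rfl
    · linarith [hh a 0 b 0 (by linarith)]
  obtain ⟨z, hz⟩ : ∃ z, ContinuousAt h z := by
    simpa [Set.Nonempty] using (hmono.countable_not_continuousAt.dense_compl ℝ).nonempty
  have hsum (u v : ℝ) : h u + h v = h z + h (u + v - z) := by
    have hlim : Tendsto (fun t => h t + h (u + v - z)) (𝓝 z) (𝓝 (h z + h (u + v - z))) :=
      hz.tendsto.add_const _
    refine le_antisymm ?_ ?_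
    · refine ge_of_tendsto (hlim.mono_left nhdsWithin_le_nhds : Tendsto _ (𝓝[>] z) _) ?_
      filter_upwards [self_mem_nhdsWithin] with t ht
      exact (hh _ _ _ _ (by linarith [mem_Ioi.mp ht])).le
    · refine le_of_tendsto (hlim.mono_left nhdsWithin_le_nhds : Tendsto _ (𝓝[<] z) _) ?_
      filter_upwards [self_mem_nhdsWithin] with t ht
      exact (hh _ _ _ _ (by linarith [mem_Iio.mp ht])).le
  rw [hsum x y, hsum (x + y) 0, add_zero]

lemma eq_mul_add_of_add_lt_add {h : ℝ → ℝ}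
    (hh : ∀ a b c d, a + b < c + d → h a + h b < h c + h d) (x : ℝ) :
    h x = x * (h 1 - h 0) + h 0 := by
  let f : ℝ →+ ℝ := AddMonoidHom.mk' (fun t => h t - h 0) fun s t => by
    linarith [add_eq_add_zero_of_add_lt_add hh s t]
  have hf : Monotone f := fun a b hab => by
    change h a - h 0 ≤ h b - h 0
    obtain rfl | hlt := hab.eq_or_lt
    · rfl
    · linarith [hh a 0 b 0 (by linarith)]
  exact eq_add_of_sub_eq (addMonoidHom_apply_eq_mul_of_monotone hf x)

lemma exists_eq_const_mul_rpow_of_mul_lt_mul {F : ℝ → ℝ} (hpos : ∀ x, 0 < x → 0 < F x)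
    (hF : ∀ a b c d : ℝ, 0 < a → 0 < b → 0 < c → 0 < d → b * c < a * d →
      F b * F c < F a * F d) :
    ∃ c : ℝ, 0 < c ∧ ∃ α : ℝ, 0 < α ∧ ∀ x : ℝ, 0 < x → F x = c * x ^ α := by
  let h (s : ℝ) : ℝ := Real.log (F (Real.exp s))
  have hexp (s : ℝ) : Real.exp (h s) = F (Real.exp s) := Real.exp_log (hpos _ (Real.exp_pos s))
  have hh (a b c d : ℝ) (hlt : a + b < c + d) : h a + h b < h c + h d := by
    rw [← Real.exp_lt_exp] at hlt ⊢
    simp only [Real.exp_add, hexp] at hlt ⊢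
    apply hF <;> first | exact Real.exp_pos _ | exact hlt
  refine ⟨F 1, hpos 1 one_pos, h 1 - h 0, ?_, fun x hx => ?_⟩
  · linarith [hh 0 0 1 0 (by norm_num)]
  · calc F x = Real.exp (h (Real.log x)) := by rw [hexp, Real.exp_log hx]
      _ = Real.exp (h 0) * Real.exp (Real.log x * (h 1 - h 0)) := by
        rw [eq_mul_add_of_add_lt_add hh, Real.exp_add, mul_comm]
      _ = F 1 * x ^ (h 1 - h 0) := by rw [hexp, Real.exp_zero, Real.rpow_def_of_pos hx]

end Power

section Sufficiency

variable {F : ℝ → ℝ} {m n : ℕ} {α : ℝ}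

lemma sub_mul_sub_le_of_deriv_mul_le {f g f' g' : ℝ → ℝ} {a b c : ℝ} (hab : a < b) (hbc : b < c)
    (hf : ∀ t ∈ Icc a c, HasDerivAt f (f' t) t) (hg : ∀ t ∈ Icc a c, HasDerivAt g (g' t) t)
    (hg' : ∀ t ∈ Ioo a c, 0 < g' t)
    (hfg : ∀ u ∈ Ioo a b, ∀ v ∈ Ioo b c, f' u * g' v ≤ f' v * g' u) :
    (f b - f a) * (g c - g a) ≤ (f c - f a) * (g b - g a) := by
  have hcont {h h' : ℝ → ℝ} (hh : ∀ t ∈ Icc a c, HasDerivAt h (h' t) t) :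
      ContinuousOn h (Icc a c) := fun t ht => (hh t ht).continuousAt.continuousWithinAt
  have hmono : StrictMonoOn g (Icc a c) := by
    refine strictMonoOn_of_deriv_pos (convex_Icc a c) (hcont hg) fun t ht => ?_
    rw [interior_Icc] at ht
    exact (hg t (Ioo_subset_Icc_self ht)).deriv ▸ hg' t ht
  have hab' : Icc a b ⊆ Icc a c := Icc_subset_Icc_right hbc.le
  have hbc' : Icc b c ⊆ Icc a c := Icc_subset_Icc_left hab.le
  obtain ⟨u, hu, hu_eq⟩ := exists_ratio_hasDerivAt_eq_ratio_slope f f' hab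
    ((hcont hf).mono hab') (fun t ht => hf t (hab' (Ioo_subset_Icc_self ht))) g g'
    ((hcont hg).mono hab') (fun t ht => hg t (hab' (Ioo_subset_Icc_self ht)))
  obtain ⟨v, hv, hv_eq⟩ := exists_ratio_hasDerivAt_eq_ratio_slope f f' hbc
    ((hcont hf).mono hbc') (fun t ht => hf t (hbc' (Ioo_subset_Icc_self ht))) g g'
    ((hcont hg).mono hbc') (fun t ht => hg t (hbc' (Ioo_subset_Icc_self ht)))
  have hac : a ≤ c := (hab.trans hbc).le
  have hb : b ∈ Icc a c := ⟨hab.le, hbc.le⟩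
  have hg_ab : 0 < g b - g a := sub_pos.mpr (hmono (left_mem_Icc.mpr hac) hb hab)
  have hg_bc : 0 < g c - g b := sub_pos.mpr (hmono hb (right_mem_Icc.mpr hac) hbc)
  have hu' : 0 < g' u := hg' u ⟨hu.1, hu.2.trans hbc⟩
  have hv' : 0 < g' v := hg' v ⟨hab.trans hv.1, hv.2⟩
  have key : (f b - f a) * (g c - g b) ≤ (f c - f b) * (g b - g a) := by
    refine le_of_mul_le_mul_right ?_ (mul_pos hu' hv')
    calc (f b - f a) * (g c - g b) * (g' u * g' v)
        = (g b - g a) * (g c - g b) * (f' u * g' v) := by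
          linear_combination -(g c - g b) * g' v * hu_eq
      _ ≤ (g b - g a) * (g c - g b) * (f' v * g' u) := by gcongr ?_ * ?_; exact hfg u hu v hv
      _ = (f c - f b) * (g b - g a) * (g' u * g' v) := by
          linear_combination (g b - g a) * g' u * hv_eq
  linarith

lemma rpow_affine_mul_rpow_le (hα : 0 ≤ α) {l u v : ℝ} (hl : 1 ≤ l) (hu : 1 ≤ u) (huv : u ≤ v) :
    (1 + l * (u - 1)) ^ α * v ^ α ≤ (1 + l * (v - 1)) ^ α * u ^ α := by
  have hbase {t : ℝ} (ht : 1 ≤ t) : 0 ≤ 1 + l * (t - 1) := by nlinarith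
  have hv : 1 ≤ v := hu.trans huv
  rw [← Real.mul_rpow (hbase hu) (by linarith), ← Real.mul_rpow (hbase hv) (by linarith)]
  refine Real.rpow_le_rpow (mul_nonneg (hbase hu) (by linarith)) ?_ hα
  linarith [mul_nonneg (sub_nonneg.mpr hl) (sub_nonneg.mpr huv)]

-- With `l = (z - 1) / (x - 1) ≥ 1`, the quotient of `(1 + l * (t - 1)) ^ α - 1` by `t ^ α - 1` is
-- nondecreasing in `t > 1`; compare `t = x` with `t = y`.
lemma rpow_sub_one_mul_rpow_sub_one_lt (hα : 1 ≤ α) {x y z w : ℝ} (hx : 1 < x) (hxy : x < y)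
    (hxz : x < z) (h : (y - 1) * (z - 1) < (x - 1) * (w - 1)) :
    (y ^ α - 1) * (z ^ α - 1) < (x ^ α - 1) * (w ^ α - 1) := by
  have hx1 : 0 < x - 1 := sub_pos.mpr hx
  obtain ⟨l, hl⟩ : ∃ l, l * (x - 1) = z - 1 := ⟨(z - 1) / (x - 1), div_mul_cancel₀ _ hx1.ne'⟩
  have hl1 : 1 ≤ l := by nlinarith
  have hf (t : ℝ) :
      HasDerivAt (fun t => (1 + l * (t - 1)) ^ α) (l * α * (1 + l * (t - 1)) ^ (α - 1)) t := by
    simpa using (((hasDerivAt_id t).sub_const 1).const_mul l |>.const_add 1).rpow_const (.inr hα)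
  have hg (t : ℝ) : HasDerivAt (fun t => t ^ α) (α * t ^ (α - 1)) t :=
    Real.hasDerivAt_rpow_const (.inr hα)
  have hle := sub_mul_sub_le_of_deriv_mul_le hx hxy (fun t _ => hf t) (fun t _ => hg t)
    (fun t ht => mul_pos (by linarith) (Real.rpow_pos_of_pos (by linarith [ht.1]) _))
    fun u hu v hv => by
      have hpow := rpow_affine_mul_rpow_le (sub_nonneg.mpr hα) hl1 hu.1.le (hu.2.trans hv.1).le
      have hlα : 0 ≤ l * α * α := by positivity
      linarith [mul_le_mul_of_nonneg_left hpow hlα]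
  have hz : 1 + l * (x - 1) = z := by linarith
  simp only [hz, sub_self, mul_zero, add_zero, Real.one_rpow] at hle
  have hlt : 1 + l * (y - 1) < w := by
    refine lt_of_mul_lt_mul_right (a := x - 1) ?_ hx1.le
    linear_combination h + (y - 1) * hl
  have hw : (1 + l * (y - 1)) ^ α < w ^ α :=
    Real.rpow_lt_rpow (by nlinarith) hlt (by linarith)
  have hxα : 0 < x ^ α - 1 := sub_pos.mpr (Real.one_lt_rpow hx (by linarith))
  linarith [mul_lt_mul_of_pos_left hw hxα]

/-- The cross ratio of the `2 × 2` submatrix of `B` in rows `0, i` and columns `0, j`: the entries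
of `B` after its rows and columns are rescaled so that row `0` and column `0` consist of ones. -/
noncomputable def crossRatio {p q : ℕ} (B : Matrix (Fin (p + 1)) (Fin (q + 1)) ℝ) (i : Fin (p + 1))
    (j : Fin (q + 1)) : ℝ :=
  B 0 0 * B i j / (B i 0 * B 0 j)

lemma det_eq_mul_crossRatio {B : Matrix (Fin 3) (Fin 3) ℝ} (hB : ∀ i j, B i j ≠ 0) :
    B.det = B 0 1 * B 0 2 * B 1 0 * B 2 0 / B 0 0 *
      ((crossRatio B 1 1 - 1) * (crossRatio B 2 2 - 1) -
        (crossRatio B 1 2 - 1) * (crossRatio B 2 1 - 1)) := by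
  have h00 := hB 0 0
  have h01 := hB 0 1
  have h02 := hB 0 2
  have h10 := hB 1 0
  have h20 := hB 2 0
  rw [Matrix.det_fin_three]
  simp only [crossRatio]
  field_simp
  ring

lemma crossRatio_map_rpow {p q : ℕ} {B : Matrix (Fin (p + 1)) (Fin (q + 1)) ℝ}
    (hB : ∀ i j, 0 ≤ B i j) (i : Fin (p + 1)) (j : Fin (q + 1)) :
    crossRatio (B.map (· ^ α)) i j = crossRatio B i j ^ α := by
  simp only [crossRatio, Matrix.map_apply]
  rw [Real.div_rpow (mul_nonneg (hB _ _) (hB _ _)) (mul_nonneg (hB _ _) (hB _ _)),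
    Real.mul_rpow (hB _ _) (hB _ _), Real.mul_rpow (hB _ _) (hB _ _)]

lemma IsTPMat.det_map_rpow_pos_fin_two {B : Matrix (Fin 2) (Fin 2) ℝ} (hB : IsTPMat B)
    (hα : 0 < α) : 0 < (B.map (· ^ α)).det := by
  have hpos i j := (hB.apply_pos i j).le
  rw [Matrix.det_fin_two, sub_pos]
  simp only [Matrix.map_apply]
  rw [← Real.mul_rpow (hpos _ _) (hpos _ _), ← Real.mul_rpow (hpos _ _) (hpos _ _)]
  exact Real.rpow_lt_rpow (mul_nonneg (hpos _ _) (hpos _ _))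
    (hB.mul_lt_mul Fin.zero_lt_one Fin.zero_lt_one) hα

lemma IsTPMat.det_map_rpow_pos_fin_three {B : Matrix (Fin 3) (Fin 3) ℝ} (hB : IsTPMat B)
    (hα : 1 ≤ α) : 0 < (B.map (· ^ α)).det := by
  have hpos := hB.apply_pos
  have hmul (i j : Fin 3) : 0 < B i 0 * B 0 j := mul_pos (hpos i 0) (hpos 0 j)
  have hposα (i j : Fin 3) : 0 < B.map (· ^ α) i j := Real.rpow_pos_of_pos (hpos i j) α
  have hscale {C : Matrix (Fin 3) (Fin 3) ℝ} (hC : ∀ i j, 0 < C i j) :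
      0 < C 0 1 * C 0 2 * C 1 0 * C 2 0 / C 0 0 := by
    have := hC 0 0; have := hC 0 1; have := hC 0 2; have := hC 1 0; have := hC 2 0
    positivity
  have hdet := hB.det_pos
  rw [det_eq_mul_crossRatio fun i j => (hpos i j).ne', mul_pos_iff_of_pos_left (hscale hpos),
    sub_pos] at hdet
  rw [det_eq_mul_crossRatio fun i j => (hposα i j).ne', mul_pos_iff_of_pos_left (hscale hposα),
    sub_pos]
  simp only [crossRatio_map_rpow fun i j => (hpos i j).le]
  refine rpow_sub_one_mul_rpow_sub_one_lt hα ?_ ?_ ?_ hdet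
  · rw [crossRatio, one_lt_div (hmul _ _), mul_comm (B 1 0)]
    exact hB.mul_lt_mul (by decide) (by decide)
  · rw [crossRatio, crossRatio, div_lt_div_iff₀ (hmul _ _) (hmul _ _)]
    linarith [mul_lt_mul_of_pos_left (hB.mul_lt_mul (i := 0) (i' := 1) (j := 1) (j' := 2)
      (by decide) (by decide)) (mul_pos (hpos 0 0) (hpos 1 0))]
  · rw [crossRatio, crossRatio, div_lt_div_iff₀ (hmul _ _) (hmul _ _)]
    linarith [mul_lt_mul_of_pos_left (hB.mul_lt_mul (i := 1) (i' := 2) (j := 0) (j' := 1)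
      (by decide) (by decide)) (mul_pos (hpos 0 0) (hpos 0 1))]

lemma preservesTP_of_pos (hF : ∀ x, 0 < x → 0 < F x) (hmn : min m n ≤ 1) :
    PreservesTP F m n := preservesTP_of_det_map_pos fun k hk B hB => by
  have hk' := hk.trans hmn
  interval_cases k
  · simp
  · simpa using hF _ (hB.apply_pos 0 0)

lemma preservesTP_rpow_of_pos (hα : 0 < α) (hmn : min m n ≤ 2) :
    PreservesTP (· ^ α) m n := preservesTP_of_det_map_pos fun k hk B hB => by
  obtain hk' | rfl := (hk.trans hmn).lt_or_eq
  · exact (preservesTP_of_pos (fun _ hx => Real.rpow_pos_of_pos hx α)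
      (by rw [min_self]; omega) B hB).det_pos
  · exact hB.det_map_rpow_pos_fin_two hα

lemma preservesTP_rpow_of_one_le (hα : 1 ≤ α) (hmn : min m n ≤ 3) :
    PreservesTP (· ^ α) m n := preservesTP_of_det_map_pos fun k hk B hB => by
  obtain hk' | rfl := (hk.trans hmn).lt_or_eq
  · exact (preservesTP_rpow_of_pos (one_pos.trans_le hα) (by rw [min_self]; omega) B hB).det_pos
  · exact hB.det_map_rpow_pos_fin_three hα

end Sufficiency

section Border

variable {R S : Type*} [One R] [One S] {n : ℕ}

/-- The matrix obtained from `N` by adding a row of ones on top and a column of ones on the left.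
Every positive matrix takes this form after its rows and columns are rescaled. -/
def border (N : Matrix (Fin n) (Fin n) R) : Matrix (Fin (n + 1)) (Fin (n + 1)) R :=
  Matrix.of (Fin.cons (fun _ => 1) fun i => Fin.cons 1 (N i))

lemma border_map {F : R → S} (hF : F 1 = 1) (N : Matrix (Fin n) (Fin n) R) :
    (border N).map F = border (N.map F) := by
  ext i j
  induction i using Fin.cases <;> induction j using Fin.cases <;> simp [border, hF]

lemma det_border {R : Type*} [CommRing R] (N : Matrix (Fin n) (Fin n) R) :
    (border N).det = (N.map (· - 1)).det := by
  rw [Matrix.det_eq_of_forall_row_eq_smul_add_const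
      (B := Matrix.of (Fin.cons (fun _ => 1) fun i => Fin.cons 0 fun j => N i j - 1))
      (Fin.cons 0 fun _ => 1) 0 rfl, Matrix.det_succ_column_zero, Fin.sum_univ_succ]
  · simp
    rfl
  · intro i j
    induction i using Fin.cases <;> induction j using Fin.cases <;> simp [border]

lemma border_fin_two (a b c d : R) :
    border !![a, b; c, d] = !![1, 1, 1; 1, a, b; 1, c, d] := by
  ext i j
  fin_cases i <;> fin_cases j <;> rfl

lemma border_fin_three (a b c d e f g h i : R) :
    border !![a, b, c; d, e, f; g, h, i] =
      !![1, 1, 1, 1; 1, a, b, c; 1, d, e, f; 1, g, h, i] := by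
  ext i j
  fin_cases i <;> fin_cases j <;> rfl

lemma isTPMat_border_fin_two {a b c d : ℝ} (ha : 1 < a) (hab : a < b) (hac : a < c)
    (hdet : (b - 1) * (c - 1) < (a - 1) * (d - 1)) : IsTPMat (border !![a, b; c, d]) := by
  have ha1 : 0 < a - 1 := sub_pos.mpr ha
  have hbd : b < d := by
    refine lt_of_mul_lt_mul_left (a := a - 1) ?_ ha1.le
    linarith [mul_pos (sub_pos.mpr (ha.trans hab)) (sub_pos.mpr hac)]
  have hcd : c < d := by
    refine lt_of_mul_lt_mul_left (a := a - 1) ?_ ha1.le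
    linarith [mul_pos (sub_pos.mpr (ha.trans hac)) (sub_pos.mpr hab)]
  have hmul : b * c < a * d := by
    suffices h : b + c < a + d by linarith
    refine lt_of_mul_lt_mul_left (a := a - 1) ?_ ha1.le
    linarith [mul_pos (sub_pos.mpr hab) (sub_pos.mpr hac)]
  refine isTPMat_fin_three ?_ ?_ ?_
  · suffices h : (0 < a ∧ 0 < b) ∧ 0 < c ∧ 0 < d by simpa [border_fin_two, Fin.forall_fin_succ]
    refine ⟨⟨?_, ?_⟩, ?_, ?_⟩ <;> linarith
  · suffices h : (((1 < a ∧ 1 < b) ∧ a < b) ∧ (1 < c ∧ 1 < d) ∧ c < d) ∧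
        (a < c ∧ b < d) ∧ b * c < a * d by simpa [border_fin_two, Fin.forall_fin_succ]
    refine ⟨⟨⟨⟨?_, ?_⟩, ?_⟩, ⟨?_, ?_⟩, ?_⟩, ⟨?_, ?_⟩, ?_⟩ <;> linarith
  · rw [det_border, Matrix.det_fin_two]
    simpa using hdet

/-- A perturbation of the `3 × 3` matrix with entries `i * j * (6 + i - j) / 2` for `1 ≤ i, j ≤ 3`,
for which total positivity of the powers `(1 + t * perturbedMatrix ε i j) ^ α`, bordered by ones,
fails when `t` and `ε` are small and `1 < α`. -/
def perturbedMatrix (ε : ℝ) : Matrix (Fin 3) (Fin 3) ℝ :=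
  !![3, 5, 6; 7, 12, 15; 12, 21, 27 + ε]

lemma isTPMat_border_perturbedMatrix {t ε : ℝ} (ht : 0 < t) (hε : 0 < ε) :
    IsTPMat (border ((perturbedMatrix ε).map (1 + t * ·))) := by
  have hmap : (perturbedMatrix ε).map (1 + t * ·) = !![1 + t * 3, 1 + t * 5, 1 + t * 6;
      1 + t * 7, 1 + t * 12, 1 + t * 15; 1 + t * 12, 1 + t * 21, 1 + t * (27 + ε)] := by
    ext i j
    fin_cases i <;> fin_cases j <;> rfl
  rw [hmap]
  have htt := mul_pos ht ht
  have htε := mul_pos ht hε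
  have httε := mul_pos ht htε
  refine isTPMat_fin_four ?_ ?_ ?_ ?_
  · simp only [border_fin_three, Fin.forall_fin_succ, Fin.reduceSucc, Matrix.of_apply,
      Matrix.cons_val, IsEmpty.forall_iff, and_true]
    constructorm* _ ∧ _ <;> positivity
  · simp only [border_fin_three, gt_iff_lt, Fin.forall_fin_succ, Fin.reduceSucc, Fin.reduceLT,
      Matrix.of_apply, Matrix.cons_val, IsEmpty.forall_iff, forall_const, and_true, true_and]
    constructorm* _ ∧ _ <;> linarith
  · simp only [Matrix.det_fin_three, Matrix.submatrix_apply]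
    simp only [border_fin_three, gt_iff_lt, Fin.forall_fin_succ, Fin.reduceSucc, Fin.reduceLT,
      Matrix.of_apply, Matrix.cons_val, IsEmpty.forall_iff, forall_const, and_true, true_and]
    constructorm* _ ∧ _ <;> linarith [mul_pos ht httε]
  · rw [det_border, Matrix.det_fin_three]
    simp only [Matrix.map_apply, Matrix.of_apply, Matrix.cons_val]
    linarith [mul_pos ht httε]

end Border

section Necessity

variable {F : ℝ → ℝ} {α : ℝ}

lemma PreservesTP.exists_eq_const_mul_rpow (h : PreservesTP F 2 2) :
    ∃ c : ℝ, 0 < c ∧ ∃ α : ℝ, 0 < α ∧ ∀ x : ℝ, 0 < x → F x = c * x ^ α :=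
  exists_eq_const_mul_rpow_of_mul_lt_mul
    (fun _ => (h.of_le one_le_two one_le_two).pos) fun _ _ _ _ => h.mul_lt_mul

lemma PreservesTP.det_map_rpow_sub_one_pos {n : ℕ} {N : Matrix (Fin n) (Fin n) ℝ}
    (h : PreservesTP (· ^ α) (n + 1) (n + 1)) (hN : IsTPMat (border N)) :
    0 < (N.map (· ^ α - 1)).det := by
  have hdet := (h _ hN).det_pos
  rwa [border_map (Real.one_rpow α), det_border, Matrix.map_map] at hdet

lemma PreservesTP.sq_two_rpow_sub_one_le (h : PreservesTP (· ^ α) 3 3) (hα : 0 ≤ α)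
    (hα1 : α ≤ 1) {s : ℝ} (hs : 0 < s) (hs1 : s < 1) :
    (2 ^ α - 1) ^ 2 ≤ α * (s ^ (1 - α) * (s + 2) ^ α) := by
  have hTP : IsTPMat (border !![1 + s, 2; 2, 1 + 2 / s]) :=
    isTPMat_border_fin_two (by linarith) (by linarith) (by linarith) (by field_simp; linarith)
  have hdet : (2 ^ α - 1) * (2 ^ α - 1) < ((1 + s) ^ α - 1) * ((1 + 2 / s) ^ α - 1) := by
    simpa [Matrix.det_fin_two] using h.det_map_rpow_sub_one_pos hTP
  have hbernoulli : (1 + s) ^ α ≤ 1 + α * s :=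
    rpow_one_add_le_one_add_mul_self (by linarith) hα hα1
  have hone : 1 ≤ (1 + s) ^ α := Real.one_le_rpow (by linarith) hα
  have hpow : s * (1 + 2 / s) ^ α = s ^ (1 - α) * (s + 2) ^ α := by
    rw [one_add_div hs.ne', Real.div_rpow (by linarith) hs.le, Real.rpow_sub hs, Real.rpow_one]
    ring
  calc (2 ^ α - 1) ^ 2 ≤ ((1 + s) ^ α - 1) * ((1 + 2 / s) ^ α - 1) := by linarith
    _ ≤ ((1 + s) ^ α - 1) * (1 + 2 / s) ^ α := by gcongr; linarith
    _ ≤ α * s * (1 + 2 / s) ^ α := by gcongr; linarith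
    _ = α * (s ^ (1 - α) * (s + 2) ^ α) := by rw [mul_assoc, hpow]

lemma PreservesTP.one_le_of_rpow (h : PreservesTP (· ^ α) 3 3) (hα : 0 < α) : 1 ≤ α := by
  by_contra! hα1
  have hlim : Tendsto (fun s : ℝ => α * (s ^ (1 - α) * (s + 2) ^ α)) (𝓝[>] 0) (𝓝 0) := by
    have hcont : Continuous fun s : ℝ => α * (s ^ (1 - α) * (s + 2) ^ α) :=
      ((Real.continuous_rpow_const (sub_nonneg.mpr hα1.le)).mul
        ((continuous_id.add_const 2).rpow_const fun _ => .inr hα.le)).const_mul α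
    have hzero : α * ((0 : ℝ) ^ (1 - α) * (0 + 2) ^ α) = 0 := by
      rw [Real.zero_rpow (sub_pos.mpr hα1).ne', zero_mul, mul_zero]
    exact (hcont.tendsto' 0 0 hzero).mono_left nhdsWithin_le_nhds
  have hle : ((2 : ℝ) ^ α - 1) ^ 2 ≤ 0 := by
    refine ge_of_tendsto hlim ?_
    filter_upwards [Ioo_mem_nhdsGT one_pos] with s hs
      using h.sq_two_rpow_sub_one_le hα.le hα1.le hs.1 hs.2
  have hpos : 0 < (2 : ℝ) ^ α - 1 := sub_pos.mpr (Real.one_lt_rpow one_lt_two hα)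
  exact hle.not_gt (by positivity)

lemma PreservesTP.exists_eq_const_mul_rpow_of_one_le (h : PreservesTP F 3 3) :
    ∃ c : ℝ, 0 < c ∧ ∃ α : ℝ, 1 ≤ α ∧ ∀ x : ℝ, 0 < x → F x = c * x ^ α := by
  obtain ⟨c, hc, α, hα, hF⟩ := (h.of_le (by simp) (by simp)).exists_eq_const_mul_rpow
  exact ⟨c, hc, α, ((preservesTP_const_mul_iff hc hF).mp h).one_le_of_rpow hα, hF⟩

lemma exists_one_add_rpow_sub_one_eq_mul (α : ℝ) : ∃ ψ : ℝ → ℝ,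
    (∀ x, (1 + x) ^ α - 1 = x * ψ x) ∧ ψ 0 = α ∧ HasDerivAt ψ (α * (α - 1) / 2) 0 := by
  have hseries := Real.one_add_rpow_hasFPowerSeriesAt_zero (a := α)
  have hslope := hseries.has_fpower_series_dslope_fslope
  refine ⟨dslope (fun x => (1 + x) ^ α) 0, fun x => ?_, ?_, ?_⟩
  · simpa using (sub_smul_dslope (fun x : ℝ => (1 + x) ^ α) 0 x).symm
  · rw [dslope_same, hseries.deriv]
    simp [binomialSeries]
  · have hcoeff : (binomialSeries ℝ α).coeff 2 = α * (α - 1) / 2 := by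
      simp [binomialSeries, Ring.choose_eq_smul, descPochhammer_succ_right, Polynomial.smeval_mul,
        Polynomial.smeval_sub, Polynomial.smeval_X]
      ring
    rw [← hcoeff, ← FormalMultilinearSeries.coeff_fslope]
    simpa using hslope.hasDerivAt

lemma hasDerivAt_det {𝕜 n : Type*} [NontriviallyNormedField 𝕜] [Fintype n] [DecidableEq n]
    {A : 𝕜 → Matrix n n 𝕜} {A' : Matrix n n 𝕜} {t : 𝕜}
    (hA : ∀ i j, HasDerivAt (fun s => A s i j) (A' i j) t) :
    HasDerivAt (fun s => (A s).det) (∑ j, ((A t).updateCol j fun i => A' i j).det) t := by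
  have hprod (σ : Equiv.Perm n) :=
    (HasDerivAt.fun_finsetProd (u := Finset.univ) fun j _ => hA (σ j) j).const_mul
      ((Equiv.Perm.sign σ : ℤ) : 𝕜)
  simp only [Matrix.det_apply']
  refine (HasDerivAt.fun_sum fun σ _ => hprod σ).congr_deriv ?_
  simp_rw [Finset.mul_sum]
  rw [Finset.sum_comm]
  congr! 3 with j _ σ
  rw [← Finset.mul_prod_erase _ _ (Finset.mem_univ j), Matrix.updateCol_self, smul_eq_mul,
    mul_comm]
  congr! 2 with k hk
  rw [Matrix.updateCol_ne (Finset.ne_of_mem_erase hk)]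

lemma PreservesTP.det_map_perturbedMatrix_zero_nonneg (h : PreservesTP (· ^ α) 4 4) (hα : 0 ≤ α)
    {t : ℝ} (ht : 0 < t) : 0 ≤ ((perturbedMatrix 0).map fun x => (1 + t * x) ^ α - 1).det := by
  have hpos {ε : ℝ} (hε : 0 < ε) :
      0 < ((perturbedMatrix ε).map fun x => (1 + t * x) ^ α - 1).det := by
    simpa only [Matrix.map_map, Function.comp_def] using
      h.det_map_rpow_sub_one_pos (isTPMat_border_perturbedMatrix ht hε)
  have hcont : Continuous fun ε => ((perturbedMatrix ε).map fun x => (1 + t * x) ^ α - 1).det := by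
    have hM : Continuous perturbedMatrix := continuous_matrix fun i j => by
      fin_cases i <;> fin_cases j <;> simp only [perturbedMatrix] <;> fun_prop
    have hpow : Continuous fun x : ℝ => (1 + t * x) ^ α - 1 :=
      (Continuous.rpow_const (by fun_prop) fun _ => .inr hα).sub continuous_const
    exact (hM.matrix_map hpow).matrix_det
  refine ge_of_tendsto ((hcont.tendsto 0).mono_left (nhdsWithin_le_nhds (s := Ioi 0))) ?_
  filter_upwards [self_mem_nhdsWithin] with ε hε using (hpos hε).le

lemma hasDerivAt_det_map_perturbedMatrix_zero {ψ : ℝ → ℝ} {ψ' : ℝ} (hψ : HasDerivAt ψ ψ' 0) :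
    HasDerivAt (fun t => ((perturbedMatrix 0).map fun x => x * ψ (t * x)).det)
      (-18 * ψ 0 ^ 2 * ψ') 0 := by
  have hentry (i j : Fin 3) : HasDerivAt (fun t => perturbedMatrix 0 i j *
      ψ (t * perturbedMatrix 0 i j)) (perturbedMatrix 0 i j ^ 2 * ψ') 0 := by
    have hψ0 : HasDerivAt ψ ψ' (0 * perturbedMatrix 0 i j) := by rwa [zero_mul]
    refine ((hψ0.comp 0 (hasDerivAt_mul_const _)).const_mul _).congr_deriv ?_
    ring
  refine (hasDerivAt_det
    (A' := .of fun i j => perturbedMatrix 0 i j ^ 2 * ψ') hentry).congr_deriv ?_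
  simp [Fin.sum_univ_succ, Matrix.det_fin_three, Matrix.updateCol_apply, perturbedMatrix]
  ring

lemma PreservesTP.eq_one_of_rpow (h : PreservesTP (· ^ α) 4 4) (hα : 1 ≤ α) : α = 1 := by
  obtain ⟨ψ, hψ, hψ0, hψ'⟩ := exists_one_add_rpow_sub_one_eq_mul α
  let D (t : ℝ) : ℝ := ((perturbedMatrix 0).map fun x => x * ψ (t * x)).det
  have hD' : HasDerivAt D (-18 * ψ 0 ^ 2 * (α * (α - 1) / 2)) 0 :=
    hasDerivAt_det_map_perturbedMatrix_zero hψ'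
  have hD0 : D 0 = 0 := by
    simp [D, Matrix.det_fin_three, perturbedMatrix]
    ring
  have hD_nonneg {t : ℝ} (ht : 0 < t) : 0 ≤ D t := by
    have hdet := h.det_map_perturbedMatrix_zero_nonneg (by linarith) ht
    have hmap : (perturbedMatrix 0).map (fun x => (1 + t * x) ^ α - 1) =
        t • (perturbedMatrix 0).map fun x => x * ψ (t * x) := by
      ext i j
      simp only [Matrix.map_apply, Matrix.smul_apply, smul_eq_mul, hψ]
      ring
    rw [hmap, Matrix.det_smul] at hdet
    exact nonneg_of_mul_nonneg_right hdet (by positivity)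
  have hderiv : 0 ≤ -18 * ψ 0 ^ 2 * (α * (α - 1) / 2) := by
    refine ge_of_tendsto hD'.tendsto_slope_zero_right ?_
    filter_upwards [self_mem_nhdsWithin] with t ht
    rw [zero_add, hD0, sub_zero, smul_eq_mul]
    exact mul_nonneg (inv_nonneg.mpr (mem_Ioi.mp ht).le) (hD_nonneg ht)
  rw [hψ0] at hderiv
  refine hα.antisymm' (le_of_not_gt fun hα1 => hderiv.not_gt ?_)
  have : 0 < α ^ 3 * (α - 1) := mul_pos (by positivity) (sub_pos.mpr hα1)
  linarith

lemma PreservesTP.exists_eq_const_mul (h : PreservesTP F 4 4) :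
    ∃ c : ℝ, 0 < c ∧ ∀ x : ℝ, 0 < x → F x = c * x := by
  obtain ⟨c, hc, α, hα, hF⟩ := (h.of_le (by simp) (by simp)).exists_eq_const_mul_rpow_of_one_le
  obtain rfl := ((preservesTP_const_mul_iff hc hF).mp h).eq_one_of_rpow hα
  exact ⟨c, hc, by simpa only [Real.rpow_one] using hF⟩

end Necessity

theorem stmt_3 (F : ℝ → ℝ) (m n : ℕ) (hm : 0 < m) (hn : 0 < n) (d : ℕ)
    (hd : d = min m n) :
    List.TFAE
      [∀ A : Matrix (Fin m) (Fin n) ℝ, IsTPMat A → IsTPMat (A.map F),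
       ∀ A : Matrix (Fin d) (Fin d) ℝ, IsTPMat A → IsTPMat (A.map F),
       (d = 1 ∧ ∀ x : ℝ, 0 < x → 0 < F x) ∨
         (d = 2 ∧ ∃ c : ℝ, 0 < c ∧ ∃ α : ℝ, 0 < α ∧
           ∀ x : ℝ, 0 < x → F x = c * x ^ α) ∨
         (d = 3 ∧ ∃ c : ℝ, 0 < c ∧ ∃ α : ℝ, 1 ≤ α ∧
           ∀ x : ℝ, 0 < x → F x = c * x ^ α) ∨
         (4 ≤ d ∧ ∃ c : ℝ, 0 < c ∧ ∀ x : ℝ, 0 < x → F x = c * x)] := by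
  have hd0 : 0 < d := hd ▸ lt_min hm hn
  tfae_have 1 → 2 := PreservesTP.of_le (hd ▸ min_le_left m n) (hd ▸ min_le_right m n)
  tfae_have 2 → 3 := fun (h : PreservesTP F d d) => by
    obtain rfl | rfl | rfl | hd4 : d = 1 ∨ d = 2 ∨ d = 3 ∨ 4 ≤ d := by omega
    · exact .inl ⟨rfl, fun _ => h.pos⟩
    · exact .inr (.inl ⟨rfl, h.exists_eq_const_mul_rpow⟩)
    · exact .inr (.inr (.inl ⟨rfl, h.exists_eq_const_mul_rpow_of_one_le⟩))
    · exact .inr (.inr (.inr ⟨hd4, (h.of_le hd4 hd4).exists_eq_const_mul⟩))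
  tfae_have 3 → 1 := by
    rintro (⟨rfl, hF⟩ | ⟨rfl, c, hc, α, hα, hF⟩ | ⟨rfl, c, hc, α, hα, hF⟩ | ⟨-, c, hc, hF⟩)
    · exact preservesTP_of_pos hF hd.ge
    · exact (preservesTP_const_mul_iff hc hF).mpr (preservesTP_rpow_of_pos hα hd.ge)
    · exact (preservesTP_const_mul_iff hc hF).mpr (preservesTP_rpow_of_one_le hα hd.ge)
    · exact (preservesTP_const_mul_iff hc hF).mpr fun _ hA => hA
  tfae_finish
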